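/- Let $P$ be an integrally closed integral polytope such that $K[P]$ is Gorenstein. Then there exists an integrally closed integral polytope $Q$ with $K[Q]$ Gorenstein such that the relative interior of $Q$ contains exactly one lattice point and the Ehrhart $h$-vectors satisfy $h(P) = h(Q)$. -/

import Mathlib

open scoped BigOperators

noncomputable section

/-- The canonical map `ℤⁿ → ℝⁿ`. -/
def toR {n : ℕ} (z : Fin n → ℤ) : Fin n → ℝ := fun i => (z i : ℝ)

/-- The monoid `E(P) = cone(P × {1}) ∩ ℤ^{n+1}` of a polytope `P ⊆ ℝⁿ`, encoded as pairs
`(z, k)` of a lattice point and its height. -/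
def EP {n : ℕ} (P : Set (Fin n → ℝ)) : Set ((Fin n → ℤ) × ℤ) :=
  {p | (0 < p.2 ∧ (fun i => (p.1 i : ℝ) / (p.2 : ℝ)) ∈ P) ∨ p = 0}

/-- The interior lattice points of the cone over `P`: `E(P) ∩ relint C(P)`. -/
def relintEP {n : ℕ} (P : Set (Fin n → ℝ)) : Set ((Fin n → ℤ) × ℤ) :=
  {p | 0 < p.2 ∧ (fun i => (p.1 i : ℝ) / (p.2 : ℝ)) ∈ intrinsicInterior ℝ P}

/-- `P` is integrally closed: every lattice point of `cP` is a sum of `c` lattice points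
of `P`. -/
def IntClosed {n : ℕ} (P : Set (Fin n → ℝ)) : Prop :=
  ∀ p ∈ EP P, ∀ c : ℕ, p.2 = (c : ℤ) → ∃ f : Fin c → (Fin n → ℤ),
    (∀ j, toR (f j) ∈ P) ∧ ∑ j, f j = p.1

/-- `K[P]` is Gorenstein: `relint E(P) = y + E(P)` for some `y` (Stanley–Danilov). -/
def GorensteinP {n : ℕ} (P : Set (Fin n → ℝ)) : Prop :=
  ∃ y ∈ relintEP P, relintEP P = (fun a => y + a) '' EP P

/-- The Ehrhart function of `P`. -/
def ehr {n : ℕ} (P : Set (Fin n → ℝ)) : ℕ → ℤ :=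
  fun m => if m = 0 then 1
    else (Set.ncard {z : Fin n → ℤ | (fun i => (z i : ℝ) / (m : ℝ)) ∈ P} : ℤ)

/-- The Ehrhart function of the relative interior of `P`. -/
def ehrInt {n : ℕ} (P : Set (Fin n → ℝ)) : ℕ → ℤ :=
  fun m => if m = 0 then 0
    else (Set.ncard {z : Fin n → ℤ |
      (fun i => (z i : ℝ) / (m : ℝ)) ∈ intrinsicInterior ℝ P} : ℤ)

/-- The Ehrhart series of `P`. -/
def ehrSeries {n : ℕ} (P : Set (Fin n → ℝ)) : PowerSeries ℤ := PowerSeries.mk (ehr P)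

/-- The dimension of a polytope `P`. -/
def pdim {n : ℕ} (P : Set (Fin n → ℝ)) : ℕ :=
  Module.finrank ℝ (affineSpan ℝ P).direction

/-!
If `relint E(P) = y + E(P)` and `y` has degree at least two, integral closedness splits it as
`y = y₁ + y₂ + z` with `y₁`, `y₂` of degree one and `z` in `E(P)`. Every lattice point of the form
`u + a y₁ + b y₂ + c z` with `u` in the cone and `a, b, c > -1` lies in `E(P)`, since adding `y`
puts it into the interior. Two consequences are that `y₁ - y₂` is a primitive lattice vector, and
that `x` and `x - (y₁ - y₂)` both lie in `E(P)` exactly when `x - y₁` does.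

Let `Q` be the image of `P` under a projection of the lattice along `y₁ - y₂`. Real lifts of lattice
points can be rounded to lattice points of `E(P)`, so `Q` is again integrally closed, and it is
Gorenstein for the image of `y₁ + z`, whose degree is one less than that of `y`. In each fibre of
`E(P) → E(Q)` exactly one point does not lie in `y₁ + E(P)`, so passing from `P` to `Q` multiplies
the Ehrhart series by `1 - t` while lowering the dimension by one: the `h`-vector is unchanged.
When `y` has degree one, it is the only interior lattice point of the polytope. Algebraically,
`K[Q]` is the quotient of `K[P]` by the regular element `x^{y₁} - x^{y₂}`.
-/

section IntrinsicInterior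

open scoped Topology

theorem mem_intrinsicInterior_iff_mem_nhdsWithin {𝕜 V E : Type*} [Ring 𝕜] [AddCommGroup V]
    [Module 𝕜 V] [TopologicalSpace E] [AddTorsor V E] {s : Set E} {x : E} :
    x ∈ intrinsicInterior 𝕜 s ↔
      x ∈ affineSpan 𝕜 s ∧ s ∈ 𝓝[(affineSpan 𝕜 s : Set E)] x := by
  simp only [mem_intrinsicInterior, mem_interior_iff_mem_nhds]
  constructor
  · rintro ⟨y, hy, rfl⟩
    exact ⟨y.2, preimage_coe_mem_nhds_subtype.1 hy⟩
  · rintro ⟨hx, hs⟩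
    exact ⟨⟨x, hx⟩, preimage_coe_mem_nhds_subtype.2 hs, rfl⟩

section Real

variable {E : Type*} [AddCommGroup E] [Module ℝ E] [TopologicalSpace E] [IsTopologicalAddGroup E]
  [ContinuousSMul ℝ E] {s : Set E} {x : E}

theorem exists_one_lt_lineMap_mem_of_mem_intrinsicInterior (hx : x ∈ intrinsicInterior ℝ s)
    {p : E} (hp : p ∈ s) : ∃ μ : ℝ, 1 < μ ∧ AffineMap.lineMap p x μ ∈ s := by
  obtain ⟨hxs, hnhds⟩ := mem_intrinsicInterior_iff_mem_nhdsWithin.1 hx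
  have htendsto : Filter.Tendsto (AffineMap.lineMap p x) (𝓝[>] (1 : ℝ))
      (𝓝[(affineSpan ℝ s : Set E)] x) := by
    refine tendsto_nhdsWithin_iff.2 ⟨?_, .of_forall fun μ =>
      AffineMap.lineMap_mem μ (subset_affineSpan ℝ s hp) hxs⟩
    exact (AffineMap.lineMap_continuous.tendsto' 1 x (AffineMap.lineMap_apply_one p x)).mono_left
      nhdsWithin_le_nhds
  have hmem : ∀ᶠ μ in 𝓝[>] (1 : ℝ), AffineMap.lineMap p x μ ∈ s := htendsto hnhds
  exact (eventually_mem_nhdsWithin.and hmem).exists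

theorem mem_intrinsicInterior_of_lineMap_mem (hs : Convex ℝ s) {q : E}
    (hq : q ∈ intrinsicInterior ℝ s) {μ : ℝ} (hμ : 1 < μ)
    (hμs : AffineMap.lineMap q x μ ∈ s) : x ∈ intrinsicInterior ℝ s := by
  obtain ⟨r, hr⟩ : ∃ r, r = AffineMap.lineMap q x μ := ⟨_, rfl⟩
  rw [← hr] at hμs
  have hμ₁ : μ - 1 ≠ 0 := by linarith
  have hx : x = AffineMap.lineMap q r μ⁻¹ := by
    simp only [hr, AffineMap.lineMap_apply_module]
    match_scalars <;> field_simp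
    ring
  obtain ⟨hqs, hnhds⟩ := mem_intrinsicInterior_iff_mem_nhdsWithin.1 hq
  have hrs := subset_affineSpan ℝ s hμs
  have hxs : x ∈ affineSpan ℝ s := hx ▸ AffineMap.lineMap_mem _ hqs hrs
  -- The homothety with centre `r` taking `x` to `q` pulls a neighbourhood of `q` back into `s`.
  let h : E → E := AffineMap.homothety r (μ / (μ - 1))
  have hhx : h x = q := by
    simp only [h, hr, AffineMap.homothety_eq_lineMap, AffineMap.lineMap_apply_module]
    match_scalars <;> field_simp <;> ring
  have hinv (v : E) : v = AffineMap.lineMap r (h v) ((μ - 1) / μ) := by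
    simp only [h, AffineMap.homothety_eq_lineMap, AffineMap.lineMap_apply_module]
    match_scalars <;> field_simp
    ring
  have hcont : Continuous h := AffineMap.homothety_continuous _ _
  have htendsto : Filter.Tendsto h (𝓝[(affineSpan ℝ s : Set E)] x)
      (𝓝[(affineSpan ℝ s : Set E)] q) :=
    hhx ▸ hcont.continuousWithinAt.tendsto_nhdsWithin fun _ hv =>
      AffineMap.lineMap_mem _ hrs hv
  refine mem_intrinsicInterior_iff_mem_nhdsWithin.2 ⟨hxs, ?_⟩
  filter_upwards [htendsto hnhds] with v hv
  rw [hinv v]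
  exact hs.lineMap_mem hμs hv ⟨by bound, by bound⟩

theorem mem_intrinsicInterior_iff_forall_exists_lineMap_mem {E : Type*} [NormedAddCommGroup E]
    [NormedSpace ℝ E] [FiniteDimensional ℝ E] {s : Set E} {x : E} (hs : Convex ℝ s)
    (hne : s.Nonempty) :
    x ∈ intrinsicInterior ℝ s ↔ ∀ p ∈ s, ∃ μ : ℝ, 1 < μ ∧ AffineMap.lineMap p x μ ∈ s := by
  refine ⟨fun hx p hp => exists_one_lt_lineMap_mem_of_mem_intrinsicInterior hx hp, fun h => ?_⟩
  obtain ⟨q, hq⟩ := hne.intrinsicInterior hs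
  obtain ⟨μ, hμ, hμs⟩ := h q (intrinsicInterior_subset hq)
  exact mem_intrinsicInterior_of_lineMap_mem hs hq hμ hμs

end Real

end IntrinsicInterior

section ConeInterior

variable {V : Type*} [AddCommGroup V] [Module ℝ V] {C : PointedCone ℝ V} {p q : V}

/-- The relative interior of a cone, in algebraic form: from each of its points one can step back
along any direction of the cone. For cones in finite-dimensional spaces this is the topological
relative interior. -/
def coneInterior (C : PointedCone ℝ V) : Set V :=
  {p | ∀ q ∈ C, ∃ ε : ℝ, 0 < ε ∧ p - ε • q ∈ C}

theorem coneInterior_subset : coneInterior C ⊆ C := fun p hp => by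
  obtain ⟨ε, -, h⟩ := hp 0 C.zero_mem
  simpa using h

theorem add_mem_coneInterior (hp : p ∈ coneInterior C) (hq : q ∈ C) :
    p + q ∈ coneInterior C := fun u hu => by
  obtain ⟨ε, hε, h⟩ := hp u hu
  exact ⟨ε, hε, by simpa only [add_sub_right_comm] using C.add_mem h hq⟩

theorem smul_mem_coneInterior {t : ℝ} (ht : 0 < t) (hp : p ∈ coneInterior C) :
    t • p ∈ coneInterior C := fun u hu => by
  obtain ⟨ε, hε, h⟩ := hp u hu
  refine ⟨t * ε, by positivity, ?_⟩
  simpa only [smul_sub, smul_smul] using PointedCone.smul_mem (C := C) ht.le h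

theorem smul_mem_coneInterior_iff {t : ℝ} (ht : 0 < t) :
    t • p ∈ coneInterior C ↔ p ∈ coneInterior C :=
  ⟨fun h => by simpa [ht.ne'] using smul_mem_coneInterior (inv_pos.2 ht) h,
    smul_mem_coneInterior ht⟩

theorem map_mem_coneInterior_map {W : Type*} [AddCommGroup W] [Module ℝ W] (π : V →ₗ[ℝ] W)
    (hp : p ∈ coneInterior C) : π p ∈ coneInterior (C.map π) := by
  rintro _ ⟨u, hu, rfl⟩
  obtain ⟨ε, hε, h⟩ := hp u hu
  exact ⟨ε, hε, _, h, by simp⟩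

end ConeInterior

section GorensteinPoint

variable {V L : Type*} [AddCommGroup V] [Module ℝ V] [AddCommGroup L] {C : PointedCone ℝ V}
  {ι : L →+ V} {y₁ y₂ z : L}

/-- `relint C ∩ L = y + C ∩ L` for the points of `L`, placed in the ambient space of `C` by `ι`.
For a cone over a polytope this is the condition that makes `K[P]` Gorenstein. -/
def IsGorensteinPoint (C : PointedCone ℝ V) (ι : L →+ V) (y : L) : Prop :=
  ∀ x, ι x ∈ coneInterior C ↔ ι (x - y) ∈ C

theorem IsGorensteinPoint.mem_coneInterior {y : L} (hy : IsGorensteinPoint C ι y) :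
    ι y ∈ coneInterior C :=
  (hy y).2 (by simp)

theorem IsGorensteinPoint.mem {y : L} (hy : IsGorensteinPoint C ι y) : ι y ∈ C :=
  coneInterior_subset hy.mem_coneInterior

/-- A decomposition `y₁ + y₂ + z` of a Gorenstein point of `C` into lattice points of `C`; the
reduction projects along `y₁ - y₂`. -/
structure GorensteinSplitting (C : PointedCone ℝ V) (ι : L →+ V) (y₁ y₂ z : L) : Prop where
  isGorensteinPoint : IsGorensteinPoint C ι (y₁ + y₂ + z)
  fst_mem : ι y₁ ∈ C
  snd_mem : ι y₂ ∈ C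
  rest_mem : ι z ∈ C

namespace GorensteinSplitting

-- Adding `ι (y₁ + y₂ + z)` makes all three coefficients positive, which gives an interior point,
-- and the Gorenstein condition takes the summand away again.
theorem mem_of_eq_add_smul (h : GorensteinSplitting C ι y₁ y₂ z) {x : L} {u : V} (hu : u ∈ C)
    {a b c : ℝ} (ha : -1 < a) (hb : -1 < b) (hc : -1 < c)
    (hx : ι x = u + a • ι y₁ + b • ι y₂ + c • ι z) : ι x ∈ C := by
  obtain ⟨m, hm, hma, hmb, hmc⟩ : ∃ m : ℝ, 0 < m ∧ m ≤ a + 1 ∧ m ≤ b + 1 ∧ m ≤ c + 1 :=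
    ⟨min (a + 1) (min (b + 1) (c + 1)), lt_min (by linarith) (lt_min (by linarith) (by linarith)),
      by simp, by simp, by simp⟩
  have hrest : u + (a + 1 - m) • ι y₁ + (b + 1 - m) • ι y₂ + (c + 1 - m) • ι z ∈ C :=
    C.add_mem (C.add_mem (C.add_mem hu (C.smul_mem (sub_nonneg.2 hma) h.fst_mem))
      (C.smul_mem (sub_nonneg.2 hmb) h.snd_mem)) (C.smul_mem (sub_nonneg.2 hmc) h.rest_mem)
  have hint : ι (x + (y₁ + y₂ + z)) ∈ coneInterior C := by
    convert add_mem_coneInterior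
      (smul_mem_coneInterior hm h.isGorensteinPoint.mem_coneInterior) hrest using 1
    simp only [map_add, hx]
    module
  simpa using (h.isGorensteinPoint _).1 hint

theorem neg_fst_mem_of_eq (h : GorensteinSplitting C ι y₁ y₂ z) (he : y₁ = y₂) : ι (-y₁) ∈ C := by
  subst he
  refine h.mem_of_eq_add_smul (a := -1 / 2) (b := -1 / 2) (c := 0) C.zero_mem
    (by norm_num) (by norm_num) (by norm_num) ?_
  simp only [map_neg]
  module

theorem exists_add_zsmul_mem (h : GorensteinSplitting C ι y₁ y₂ z) {x : L} {r : ℝ}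
    (hx : ι x + r • ι (y₁ - y₂) ∈ C) : ∃ k : ℤ, ι (x + k • (y₁ - y₂)) ∈ C := by
  refine ⟨⌈r⌉, h.mem_of_eq_add_smul (a := ⌈r⌉ - r) (b := r - ⌈r⌉) (c := 0) hx ?_ ?_ ?_ ?_⟩
  · linarith [Int.le_ceil r]
  · linarith [Int.ceil_lt_add_one r]
  · norm_num
  · simp only [map_add, map_sub, map_zsmul, ← Int.cast_smul_eq_zsmul ℝ]
    module

theorem exists_sub_add_zsmul_mem (h : GorensteinSplitting C ι y₁ y₂ z) {x : L} {r ε : ℝ}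
    (hε : 0 < ε) (hx : ι x - ε • ι (y₁ + y₂ + z) + r • ι (y₁ - y₂) ∈ C) :
    ∃ k : ℤ, ι (x - (y₁ + z) + k • (y₁ - y₂)) ∈ C := by
  refine ⟨⌈r⌉, h.mem_of_eq_add_smul (a := ε - 1 + (⌈r⌉ - r)) (b := ε - (⌈r⌉ - r)) (c := ε - 1)
    hx ?_ ?_ ?_ ?_⟩
  · linarith [Int.le_ceil r]
  · linarith [Int.ceil_lt_add_one r]
  · linarith
  · simp only [map_add, map_sub, map_zsmul, ← Int.cast_smul_eq_zsmul ℝ]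
    module

theorem mem_and_sub_mem_iff (h : GorensteinSplitting C ι y₁ y₂ z) {x : L} :
    ι x ∈ C ∧ ι (x - (y₁ - y₂)) ∈ C ↔ ι (x - y₁) ∈ C := by
  constructor
  · rintro ⟨hx, hx'⟩
    refine h.mem_of_eq_add_smul (a := -1 / 2) (b := -1 / 2) (c := 0)
      (C.smul_mem (r := 1 / 2) (by norm_num) (C.add_mem hx hx')) (by norm_num) (by norm_num)
      (by norm_num) ?_
    simp only [map_sub]
    module
  · intro hx
    constructor
    · simpa using C.add_mem hx h.fst_mem
    · simpa [sub_add] using C.add_mem hx h.snd_mem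

end GorensteinSplitting

end GorensteinPoint

section ProjAlong

variable {R M : Type*} [CommRing R] [AddCommGroup M] [Module R M]

/-- The projection along `w` onto the kernel of `f`, for `f w = 1`. -/
def projAlong (f : Module.Dual R M) (w : M) : M →ₗ[R] M :=
  LinearMap.id - f.smulRight w

variable {f : Module.Dual R M} {w x y : M}

theorem projAlong_apply (f : Module.Dual R M) (w x : M) : projAlong f w x = x - f x • w := rfl

theorem projAlong_self (hf : f w = 1) : projAlong f w w = 0 := by
  simp [projAlong_apply, hf]

theorem apply_projAlong (hf : f w = 1) (x : M) : f (projAlong f w x) = 0 := by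
  simp [projAlong_apply, hf]

theorem projAlong_eq_self (hx : f x = 0) : projAlong f w x = x := by
  simp [projAlong_apply, hx]

theorem projAlong_add_smul_self (hf : f w = 1) (x : M) (r : R) :
    projAlong f w (x + r • w) = projAlong f w x := by
  simp [projAlong_self hf]

theorem eq_add_smul_of_projAlong_eq (h : projAlong f w x = projAlong f w y) :
    x = y + (f x - f y) • w := by
  calc
    x = projAlong f w x + f x • w := by simp [projAlong_apply]
    _ = y + (f x - f y) • w := by rw [h, projAlong_apply]; module

theorem map_projAlong {L V : Type*} [AddCommGroup L] [AddCommGroup V] [Module ℝ V] {ι : L →+ V}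
    {f : Module.Dual ℤ L} {F : Module.Dual ℝ V} (hF : ∀ x, F (ι x) = f x) (w x : L) :
    ι (projAlong f w x) = projAlong F (ι w) (ι x) := by
  simp [projAlong_apply, hF, Int.cast_smul_eq_zsmul]

theorem finrank_map_projAlong {K V : Type*} [Field K] [AddCommGroup V] [Module K V]
    [FiniteDimensional K V] {f : Module.Dual K V} {w : V} (hf : f w = 1) {D : Submodule K V}
    (hw : w ∈ D) : Module.finrank K (D.map (projAlong f w)) + 1 = Module.finrank K D := by
  have hker : Module.finrank K (LinearMap.ker ((projAlong f w).domRestrict D)) = 1 := by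
    refine finrank_eq_one ⟨⟨w, hw⟩, projAlong_self hf⟩ (fun h => ?_) ?_
    · have hw₀ : w = 0 := congrArg (fun u => (u.1 : V)) h
      simp [hw₀] at hf
    · rintro ⟨⟨u, hu⟩, hu₀⟩
      refine ⟨f u, Subtype.ext (Subtype.ext ?_)⟩
      exact (sub_eq_zero.1 hu₀).symm
  rw [← ((projAlong f w).domRestrict D).finrank_range_add_finrank_ker, hker,
    LinearMap.range_domRestrict]

end ProjAlong

section MapProjAlong

variable {V L : Type*} [AddCommGroup V] [Module ℝ V] [AddCommGroup L] {C : PointedCone ℝ V}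
  {ι : L →+ V} {f : Module.Dual ℤ L} {F : Module.Dual ℝ V} {w x y₁ y₂ z : L}

theorem apply_eq_zero_of_mem_map_projAlong (hF : ∀ x, F (ι x) = f x) (hw : f w = 1)
    (hx : ι x ∈ C.map (projAlong F (ι w))) : f x = 0 := by
  obtain ⟨p, -, hpx : projAlong F (ι w) p = ι x⟩ := hx
  have hFw : F (ι w) = 1 := by rw [hF, hw, Int.cast_one]
  exact_mod_cast (hF x).symm.trans (hpx ▸ apply_projAlong hFw p)

namespace GorensteinSplitting

theorem mem_map_projAlong_iff (h : GorensteinSplitting C ι y₁ y₂ z) (hF : ∀ x, F (ι x) = f x)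
    (hf : f (y₁ - y₂) = 1) :
    ι x ∈ C.map (projAlong F (ι (y₁ - y₂))) ↔ ∃ e, ι e ∈ C ∧ projAlong f (y₁ - y₂) e = x := by
  constructor
  · intro hx
    have hfx := apply_eq_zero_of_mem_map_projAlong hF hf hx
    obtain ⟨p, hp, hpx : projAlong F (ι (y₁ - y₂)) p = ι x⟩ := hx
    obtain ⟨k, hk⟩ := h.exists_add_zsmul_mem (x := x) (r := F p) (by
      rwa [← hpx, projAlong_apply, sub_add_cancel])
    exact ⟨_, hk, by rw [projAlong_add_smul_self hf, projAlong_eq_self hfx]⟩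
  · rintro ⟨e, he, rfl⟩
    exact ⟨ι e, he, (map_projAlong hF _ _).symm⟩

theorem sub_mem_of_mem_coneInterior_map (h : GorensteinSplitting C ι y₁ y₂ z)
    (hF : ∀ x, F (ι x) = f x) (hf : f (y₁ - y₂) = 1)
    (hx : ι x ∈ coneInterior (C.map (projAlong F (ι (y₁ - y₂))))) :
    ι (x - projAlong f (y₁ - y₂) (y₁ + z)) ∈ C.map (projAlong F (ι (y₁ - y₂))) := by
  have hfx := apply_eq_zero_of_mem_map_projAlong hF hf (coneInterior_subset hx)
  obtain ⟨ε, hε, p, hp, hpx : projAlong F (ι (y₁ - y₂)) p = _⟩ :=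
    hx (projAlong F (ι (y₁ - y₂)) (ι (y₁ + y₂ + z))) ⟨_, h.isGorensteinPoint.mem, rfl⟩
  have hp_eq : p = ι x - ε • ι (y₁ + y₂ + z)
      + (F p + ε * F (ι (y₁ + y₂ + z))) • ι (y₁ - y₂) := by
    rw [projAlong_apply, projAlong_apply, sub_eq_iff_eq_add] at hpx
    nth_rw 1 [hpx]
    module
  obtain ⟨k, hk⟩ := h.exists_sub_add_zsmul_mem hε (hp_eq ▸ hp)
  refine (h.mem_map_projAlong_iff hF hf).2 ⟨_, hk, ?_⟩
  rw [projAlong_add_smul_self hf, map_sub, projAlong_eq_self hfx]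

theorem projAlong_mem_coneInterior_map (h : GorensteinSplitting C ι y₁ y₂ z)
    (hF : ∀ x, F (ι x) = f x) (hf : f (y₁ - y₂) = 1) :
    ι (projAlong f (y₁ - y₂) (y₁ + z)) ∈
      coneInterior (C.map (projAlong F (ι (y₁ - y₂)))) := by
  have hFw : F (ι (y₁ - y₂)) = 1 := by rw [hF, hf, Int.cast_one]
  rw [map_projAlong hF]
  set π := projAlong F (ι (y₁ - y₂))
  have h₁₂ : π (ι y₁) = π (ι y₂) := by
    rw [← sub_eq_zero, ← map_sub, ← map_sub]
    exact projAlong_self hFw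
  have hz : π (ι z) ∈ C.map π := ⟨_, h.rest_mem, rfl⟩
  -- The images of `y₁` and `y₂` agree, so `2 (y₁ + z)` has the image of `(y₁ + y₂ + z) + z`.
  convert smul_mem_coneInterior (t := 1 / 2) (by norm_num) (add_mem_coneInterior
    (map_mem_coneInterior_map π h.isGorensteinPoint.mem_coneInterior) hz) using 1
  simp only [map_add, h₁₂]
  module

theorem isGorensteinPoint_map_projAlong (h : GorensteinSplitting C ι y₁ y₂ z)
    (hF : ∀ x, F (ι x) = f x) (hf : f (y₁ - y₂) = 1) :
    IsGorensteinPoint (C.map (projAlong F (ι (y₁ - y₂)))) ι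
      (projAlong f (y₁ - y₂) (y₁ + z)) := fun x => by
  refine ⟨h.sub_mem_of_mem_coneInterior_map hF hf, fun hx => ?_⟩
  simpa only [← map_add, add_sub_cancel] using
    add_mem_coneInterior (h.projAlong_mem_coneInterior_map hF hf) hx

end GorensteinSplitting

end MapProjAlong

section Counting

variable {V L : Type*} [AddCommGroup V] [Module ℝ V] [AddCommGroup L] {C : PointedCone ℝ V}
  {ι : L →+ V} {deg : L →+ ℤ} {y₁ y₂ z : L}

/-- The lattice points of degree `m` in the cone `C`. -/
def latticeLevel (C : PointedCone ℝ V) (ι : L →+ V) (deg : L →+ ℤ) (m : ℤ) : Set L :=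
  {x | ι x ∈ C ∧ deg x = m}

theorem sub_mem_of_add_zsmul_mem {x w : L} {k : ℤ} (hk : 1 ≤ k) (hx : ι x ∈ C)
    (hxk : ι (x + k • w) ∈ C) : ι (x + k • w - w) ∈ C := by
  have hk₀ : (1 : ℝ) ≤ k := by exact_mod_cast hk
  have hcomb : ι (x + k • w - w) = (1 / k : ℝ) • ι x + ((k - 1) / k : ℝ) • ι (x + k • w) := by
    simp only [map_sub, map_add, map_zsmul, ← Int.cast_smul_eq_zsmul ℝ]
    match_scalars <;> field_simp
    ring
  rw [hcomb]
  exact C.add_mem (C.smul_mem (by positivity) hx)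
    (C.smul_mem (div_nonneg (by linarith) (by linarith)) hxk)

namespace GorensteinSplitting

theorem fst_ne_snd (h : GorensteinSplitting C ι y₁ y₂ z) (hnonneg : ∀ x, ι x ∈ C → 0 ≤ deg x)
    (hy₁ : 0 < deg y₁) : y₁ ≠ y₂ := fun he => by
  have := hnonneg _ (h.neg_fst_mem_of_eq he)
  rw [map_neg] at this
  linarith

theorem isUnit_of_sub_eq_zsmul [IsAddTorsionFree L] (h : GorensteinSplitting C ι y₁ y₂ z)
    (hzero : ∀ x, ι x ∈ C → deg x = 0 → x = 0) (hne : y₁ ≠ y₂) (hdeg : deg y₁ = deg y₂) {d : ℤ}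
    {v : L} (hv : y₁ - y₂ = d • v) : IsUnit d := by
  have hdv : d ≠ 0 ∧ v ≠ 0 := by
    rw [← smul_ne_zero_iff, ← hv]
    exact sub_ne_zero.2 hne
  have hdegv : deg v = 0 := by
    have : d * deg v = 0 := by
      rw [← smul_eq_mul, ← map_zsmul, ← hv, map_sub, hdeg, sub_self]
    exact (mul_eq_zero.1 this).resolve_left hdv.1
  have hd : (d : ℝ) ≠ 0 := Int.cast_ne_zero.2 hdv.1
  obtain ⟨k, hk⟩ := h.exists_add_zsmul_mem (x := v) (r := -(d : ℝ)⁻¹) (by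
    rw [hv, map_zsmul, ← Int.cast_smul_eq_zsmul ℝ, smul_smul, neg_mul, inv_mul_cancel₀ hd]
    simp)
  have hvk : (1 + k * d) • v = 0 := by
    rw [← hzero _ hk (by simp [hdegv, hdeg]), hv]
    module
  have hkd : 1 + k * d = 0 := (smul_eq_zero.1 hvk).resolve_right hdv.2
  exact IsUnit.of_mul_eq_one (-k) (by linarith)

theorem image_add_fst_latticeLevel (h : GorensteinSplitting C ι y₁ y₂ z) (m : ℤ) :
    (· + y₁) '' latticeLevel C ι deg m =
      latticeLevel C ι deg (m + deg y₁) ∩ {x | ι (x - (y₁ - y₂)) ∈ C} := by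
  ext x
  have hx : x ∈ latticeLevel C ι deg (m + deg y₁) ∩ {x | ι (x - (y₁ - y₂)) ∈ C} ↔
      ι (x - y₁) ∈ C ∧ deg x = m + deg y₁ := by
    rw [← h.mem_and_sub_mem_iff]
    exact and_right_comm
  rw [hx, Set.mem_image]
  constructor
  · rintro ⟨x, ⟨hxC, hxm⟩, rfl⟩
    exact ⟨by simpa using hxC, by rw [map_add, hxm]⟩
  · rintro ⟨hxC, hxm⟩
    exact ⟨x - y₁, ⟨hxC, by rw [map_sub, hxm, add_sub_cancel_right]⟩, sub_add_cancel x y₁⟩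

variable {f : Module.Dual ℤ L} {F : Module.Dual ℝ V}

-- Each fibre of the projection is a lattice segment, and its lowest point is the only one from
-- which `y₁ - y₂` cannot be subtracted.
theorem bijOn_projAlong (h : GorensteinSplitting C ι y₁ y₂ z) (hF : ∀ x, F (ι x) = f x)
    (hf : f (y₁ - y₂) = 1) (hdeg : deg y₁ = deg y₂) {m : ℤ}
    (hfin : (latticeLevel C ι deg m).Finite) :
    Set.BijOn (projAlong f (y₁ - y₂))
      (latticeLevel C ι deg m \ {x | ι (x - (y₁ - y₂)) ∈ C})
      (latticeLevel (C.map (projAlong F (ι (y₁ - y₂)))) ι deg m) := by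
  have hdegπ (x : L) : deg (projAlong f (y₁ - y₂) x) = deg x := by simp [projAlong_apply, hdeg]
  refine ⟨?_, ?_, ?_⟩
  · rintro x ⟨⟨hxC, hxm⟩, -⟩
    exact ⟨(h.mem_map_projAlong_iff hF hf).2 ⟨x, hxC, rfl⟩, (hdegπ x).trans hxm⟩
  · rintro x ⟨⟨hxC, -⟩, hx⟩ x' ⟨⟨hxC', -⟩, hx'⟩ he
    have hle {a b : L} (ha : ι a ∈ C) (hb : ι b ∈ C) (hb' : ι (b - (y₁ - y₂)) ∉ C)
        (hab : projAlong f (y₁ - y₂) b = projAlong f (y₁ - y₂) a) : f b - f a ≤ 0 := by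
      rw [eq_add_smul_of_projAlong_eq hab] at hb hb'
      by_contra! hlt
      exact hb' (sub_mem_of_add_zsmul_mem hlt ha hb)
    have hfx : f x - f x' = 0 := by
      linarith [hle hxC hxC' hx' he.symm, hle hxC' hxC hx he]
    rw [eq_add_smul_of_projAlong_eq he, hfx, zero_smul, add_zero]
  · rintro x ⟨hxC, hxm⟩
    obtain ⟨e, heC, rfl⟩ := (h.mem_map_projAlong_iff hF hf).1 hxC
    rw [hdegπ] at hxm
    obtain ⟨a, ⟨ha, hae⟩, hmin⟩ := Set.exists_min_image
      (latticeLevel C ι deg m ∩ {a | projAlong f (y₁ - y₂) a = projAlong f (y₁ - y₂) e}) f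
      (hfin.inter_of_left _) ⟨e, ⟨heC, hxm⟩, rfl⟩
    refine ⟨a, ⟨ha, fun haC => ?_⟩, hae⟩
    have hlow := hmin (a - (y₁ - y₂)) ⟨⟨haC, by rw [map_sub, ha.2]; simp [hdeg]⟩, by
      rw [Set.mem_ofPred_eq, map_sub, projAlong_self hf, sub_zero, hae]⟩
    rw [map_sub, hf] at hlow
    linarith

theorem ncard_latticeLevel (h : GorensteinSplitting C ι y₁ y₂ z) (hF : ∀ x, F (ι x) = f x)
    (hf : f (y₁ - y₂) = 1) (hdeg : deg y₁ = deg y₂) {m : ℤ}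
    (hfin : (latticeLevel C ι deg (m + deg y₁)).Finite) :
    (latticeLevel C ι deg (m + deg y₁)).ncard = (latticeLevel C ι deg m).ncard +
      (latticeLevel (C.map (projAlong F (ι (y₁ - y₂)))) ι deg (m + deg y₁)).ncard := by
  have hbij := h.bijOn_projAlong hF hf hdeg hfin
  rw [← Set.ncard_inter_add_ncard_sdiff_eq_ncard _ {x | ι (x - (y₁ - y₂)) ∈ C} hfin,
    ← h.image_add_fst_latticeLevel, Set.ncard_image_of_injective _ (add_left_injective y₁),
    ← hbij.image_eq, hbij.injOn.ncard_image]

end GorensteinSplitting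

theorem exists_dotProduct_eq_one {κ : Type*} [Fintype κ] {w : κ → ℤ}
    (hw : ∀ (d : ℤ) (v : κ → ℤ), w = d • v → IsUnit d) : ∃ l : κ → ℤ, l ⬝ᵥ w = 1 := by
  obtain ⟨g, hg⟩ := Finset.gcd_eq_sum_mul Finset.univ w
  choose v hv using fun i => Finset.gcd_dvd (f := w) (Finset.mem_univ i)
  have hgcd : Finset.univ.gcd w = 1 :=
    (Finset.normalize_gcd).symm.trans (normalize_eq_one.2 (hw _ v (funext hv)))
  exact ⟨g, by rw [dotProduct_comm, dotProduct, ← hg, hgcd]⟩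

theorem mk_mul_one_sub_X {R : Type*} [Ring R] {a b : ℕ → R} (h₀ : b 0 = a 0)
    (hsucc : ∀ m, a (m + 1) = a m + b (m + 1)) :
    PowerSeries.mk a * (1 - PowerSeries.X) = PowerSeries.mk b := by
  ext (_ | m)
  · simp [mul_sub, h₀]
  · simp [mul_sub, PowerSeries.coeff_succ_mul_X, hsucc]

end Counting

section ConeOver

variable {E : Type*} [AddCommGroup E] [Module ℝ E] {P : Set E} {p : E × ℝ}

/-- The cone over `P × {1}`. -/
def coneOver (P : Set E) : PointedCone ℝ (E × ℝ) := PointedCone.hull ℝ (P ×ˢ {1})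

theorem coneOver_image {E' : Type*} [AddCommGroup E'] [Module ℝ E'] (g : E →ₗ[ℝ] E') (P : Set E) :
    coneOver (g '' P) = (coneOver P).map (g.prodMap LinearMap.id) := by
  rw [coneOver, coneOver, PointedCone.map, PointedCone.hull, PointedCone.hull, Submodule.map_span,
    LinearMap.coe_restrictScalars, LinearMap.coe_prodMap, Set.prodMap_image_prod,
    LinearMap.id_coe, Set.image_id]

theorem inv_smul_add_mem (hP : Convex ℝ P) {s t : ℝ} (hs : 0 < s) (ht : 0 < t) {v w : E}
    (hv : s⁻¹ • v ∈ P) (hw : t⁻¹ • w ∈ P) : (s + t)⁻¹ • (v + w) ∈ P := by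
  convert hP hv hw (a := s / (s + t)) (b := t / (s + t)) (by positivity) (by positivity)
    (by field_simp) using 1
  match_scalars <;> field_simp

theorem mem_coneOver (hP : Convex ℝ P) : p ∈ coneOver P ↔ p = 0 ∨ 0 < p.2 ∧ p.2⁻¹ • p.1 ∈ P := by
  constructor
  · intro hp
    induction hp using Submodule.span_induction with
    | mem p hp =>
      obtain ⟨hpP, hp₁ : p.2 = 1⟩ := hp
      exact .inr ⟨by simp [hp₁], by simpa [hp₁] using hpP⟩
    | zero => exact .inl rfl
    | add p q _ _ hp hq =>
      rcases hp with rfl | ⟨hp, hpP⟩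
      · simpa using hq
      rcases hq with rfl | ⟨hq, hqP⟩
      · simpa using .inr ⟨hp, hpP⟩
      exact .inr ⟨add_pos hp hq, inv_smul_add_mem hP hp hq hpP hqP⟩
    | smul r p _ hp =>
      rcases hp with rfl | ⟨hp, hpP⟩
      · simp
      rcases r.2.eq_or_lt with hr | hr
      · obtain rfl : 0 = r := Subtype.ext hr
        exact .inl (zero_smul _ _)
      · refine .inr ⟨mul_pos hr hp, ?_⟩
        convert hpP using 1
        change (r.1 * p.2)⁻¹ • r.1 • p.1 = _
        match_scalars
        field_simp
  · rintro (rfl | ⟨hp, hpP⟩)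
    · exact zero_mem _
    · have hmem : (p.2⁻¹ • p.1, (1 : ℝ)) ∈ coneOver P := Submodule.subset_span ⟨hpP, rfl⟩
      convert (coneOver P).smul_mem hp.le hmem using 1
      ext <;> simp [hp.ne']

theorem mk_one_mem_coneOver (hP : Convex ℝ P) {v : E} : (v, (1 : ℝ)) ∈ coneOver P ↔ v ∈ P := by
  simp [mem_coneOver hP]

theorem snd_nonneg_of_mem_coneOver (hP : Convex ℝ P) (hp : p ∈ coneOver P) : 0 ≤ p.2 := by
  rcases (mem_coneOver hP).1 hp with rfl | ⟨hp, -⟩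
  exacts [le_rfl, hp.le]

theorem eq_zero_of_mem_coneOver (hP : Convex ℝ P) (hp : p ∈ coneOver P) (hp₀ : p.2 = 0) :
    p = 0 :=
  ((mem_coneOver hP).1 hp).resolve_right fun h => h.1.ne' hp₀

theorem snd_pos_of_mem_coneInterior_coneOver (hP : Convex ℝ P) (hne : P.Nonempty)
    (hp : p ∈ coneInterior (coneOver P)) : 0 < p.2 := by
  obtain ⟨v, hv⟩ := hne
  obtain ⟨ε, hε, h⟩ := hp (v, 1) ((mk_one_mem_coneOver hP).2 hv)
  have hle := snd_nonneg_of_mem_coneOver hP h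
  simp only [Prod.snd_sub, Prod.smul_snd, smul_eq_mul, mul_one] at hle
  linarith

end ConeOver

section ConeOverInterior

variable {E : Type*} [NormedAddCommGroup E] [NormedSpace ℝ E] [FiniteDimensional ℝ E] {P : Set E}

theorem mk_one_mem_coneInterior_coneOver (hP : Convex ℝ P) (hne : P.Nonempty) {v : E} :
    (v, (1 : ℝ)) ∈ coneInterior (coneOver P) ↔ v ∈ intrinsicInterior ℝ P := by
  constructor
  · refine fun hv => (mem_intrinsicInterior_iff_forall_exists_lineMap_mem hP hne).2 fun p hp => ?_
    obtain ⟨ε, hε, h⟩ := hv (p, 1) ((mk_one_mem_coneOver hP).2 hp)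
    refine ⟨1 + ε, by linarith, (mk_one_mem_coneOver hP).1 ?_⟩
    convert (coneOver P).add_mem h ((coneOver P).smul_mem hε.le (coneInterior_subset hv)) using 1
    ext
    · simp only [AffineMap.lineMap_apply_module, Prod.fst_add, Prod.fst_sub, Prod.smul_fst]
      module
    · simp
  · intro hv q hq
    rcases (mem_coneOver hP).1 hq with rfl | ⟨hq₂, hqP⟩
    · exact ⟨1, one_pos, by simpa [mk_one_mem_coneOver hP] using intrinsicInterior_subset hv⟩
    obtain ⟨μ, hμ, hr⟩ :=
      (mem_intrinsicInterior_iff_forall_exists_lineMap_mem hP hne).1 hv _ hqP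
    refine ⟨(1 - μ⁻¹) / q.2, div_pos (sub_pos.2 (inv_lt_one_of_one_lt₀ hμ)) hq₂, ?_⟩
    have hμ₀ : 0 < μ := one_pos.trans hμ
    convert (coneOver P).smul_mem (inv_nonneg.2 hμ₀.le) ((mk_one_mem_coneOver hP).2 hr) using 1
    ext
    · simp only [AffineMap.lineMap_apply_module, Prod.fst_sub, Prod.smul_fst]
      match_scalars <;> field_simp
      ring
    · simp [hq₂.ne']

theorem mem_coneInterior_coneOver (hP : Convex ℝ P) (hne : P.Nonempty) {p : E × ℝ} :
    p ∈ coneInterior (coneOver P) ↔ 0 < p.2 ∧ p.2⁻¹ • p.1 ∈ intrinsicInterior ℝ P := by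
  rw [← and_iff_right_of_imp (snd_pos_of_mem_coneInterior_coneOver hP hne)]
  refine and_congr_right fun hp => ?_
  rw [← mk_one_mem_coneInterior_coneOver hP hne, ← smul_mem_coneInterior_iff (inv_pos.2 hp)]
  simp [Prod.smul_def, hp.ne']

end ConeOverInterior

section LatticePolytope

variable {n : ℕ} {P : Set (Fin n → ℝ)}

/-- `toR` as a homomorphism of additive groups. -/
def toRHom (n : ℕ) : (Fin n → ℤ) →+ (Fin n → ℝ) := (Int.castAddHom ℝ).compLeft (Fin n)

theorem toRHom_apply (v : Fin n → ℤ) : toRHom n v = toR v := rfl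

theorem isometry_toR : Isometry (toR : (Fin n → ℤ) → Fin n → ℝ) :=
  .piMap (fun _ => (Int.cast : ℤ → ℝ)) fun _ => Real.isometry_intCast

/-- The inclusion of the graded lattice `ℤⁿ × ℤ`, which contains `E(P)`, into the real vector
space containing the cone over `P`. -/
def gradedToR (n : ℕ) : (Fin n → ℤ) × ℤ →+ (Fin n → ℝ) × ℝ :=
  (toRHom n).prodMap (Int.castAddHom ℝ)

theorem gradedToR_apply (p : (Fin n → ℤ) × ℤ) : gradedToR n p = (toR p.1, (p.2 : ℝ)) := rfl

theorem gradedToR_injective : Function.Injective (gradedToR n) :=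
  isometry_toR.injective.prodMap Int.cast_injective

theorem div_eq_inv_smul_toR (v : Fin n → ℤ) (t : ℝ) :
    (fun i => (v i : ℝ) / t) = t⁻¹ • toR v := by
  ext i
  simp [toR, div_eq_inv_mul]

theorem mem_EP_iff (hP : Convex ℝ P) {p : (Fin n → ℤ) × ℤ} :
    p ∈ EP P ↔ gradedToR n p ∈ coneOver P := by
  rw [mem_coneOver hP, map_eq_zero_iff _ gradedToR_injective, or_comm]
  simp [EP, gradedToR_apply, div_eq_inv_smul_toR]

theorem mem_relintEP_iff (hP : Convex ℝ P) (hne : P.Nonempty) {p : (Fin n → ℤ) × ℤ} :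
    p ∈ relintEP P ↔ gradedToR n p ∈ coneInterior (coneOver P) := by
  rw [mem_coneInterior_coneOver hP hne]
  simp [relintEP, gradedToR_apply, div_eq_inv_smul_toR]

theorem gorensteinP_iff (hP : Convex ℝ P) (hne : P.Nonempty) :
    GorensteinP P ↔ ∃ y, IsGorensteinPoint (coneOver P) (gradedToR n) y := by
  have himage (y x : (Fin n → ℤ) × ℤ) :
      x ∈ (fun a => y + a) '' EP P ↔ gradedToR n (x - y) ∈ coneOver P := by
    rw [Set.image_add_left, Set.mem_preimage, neg_add_eq_sub, mem_EP_iff hP]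
  constructor
  · rintro ⟨y, -, hy⟩
    exact ⟨y, fun x => by rw [← mem_relintEP_iff hP hne, hy, himage]⟩
  · rintro ⟨y, hy⟩
    refine ⟨y, (mem_relintEP_iff hP hne).2 hy.mem_coneInterior, Set.ext fun x => ?_⟩
    rw [mem_relintEP_iff hP hne, himage, hy x]

/-- The lattice points of `cone(P × {1})` at height `m`. -/
abbrev coneLevel (P : Set (Fin n → ℝ)) (m : ℤ) : Set ((Fin n → ℤ) × ℤ) :=
  latticeLevel (coneOver P) (gradedToR n) (AddMonoidHom.snd (Fin n → ℤ) ℤ) m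

theorem ncard_setOf_and_snd_eq {α β : Type*} (A : α × β → Prop) (b : β) :
    {p : α × β | A p ∧ p.2 = b}.ncard = {a | A (a, b)}.ncard := by
  rw [← Set.ncard_image_of_injective {a | A (a, b)} (Prod.mk_left_injective b)]
  congr 1
  ext ⟨a, b'⟩
  simp only [Set.mem_ofPred_eq, Set.mem_image, Prod.mk.injEq]
  constructor
  · rintro ⟨ha, rfl⟩
    exact ⟨a, ha, rfl, rfl⟩
  · rintro ⟨a, ha, rfl, rfl⟩
    exact ⟨ha, rfl⟩

theorem ncard_coneLevel_zero (hP : Convex ℝ P) : (coneLevel P 0).ncard = 1 := by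
  refine Set.ncard_eq_one.2 ⟨0, Set.eq_singleton_iff_unique_mem.2 ⟨⟨?_, rfl⟩, ?_⟩⟩
  · rw [map_zero]
    exact zero_mem _
  · rintro p ⟨hp, hp₀ : p.2 = 0⟩
    rw [← map_eq_zero_iff _ gradedToR_injective]
    exact eq_zero_of_mem_coneOver hP hp (by rw [gradedToR_apply, hp₀, Int.cast_zero])

theorem ehr_eq_ncard_coneLevel (hP : Convex ℝ P) (m : ℕ) : ehr P m = (coneLevel P m).ncard := by
  rcases eq_or_ne m 0 with rfl | hm
  · simp [ehr, ncard_coneLevel_zero hP]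
  · have hlevel : coneLevel P m = {p | p ∈ EP P ∧ p.2 = m} := by
      simp [latticeLevel, mem_EP_iff hP]
    rw [hlevel, ncard_setOf_and_snd_eq]
    simp [ehr, EP, hm, Nat.pos_of_ne_zero hm]

theorem ehrInt_eq_ncard (hP : Convex ℝ P) (hne : P.Nonempty) {m : ℕ} (hm : m ≠ 0) :
    ehrInt P m = {p | gradedToR n p ∈ coneInterior (coneOver P) ∧ p.2 = m}.ncard := by
  simp_rw [← mem_relintEP_iff hP hne]
  rw [ncard_setOf_and_snd_eq]
  simp [ehrInt, relintEP, hm, Nat.pos_of_ne_zero hm]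

theorem ehrInt_succ (hP : Convex ℝ P) (hne : P.Nonempty) {y : (Fin n → ℤ) × ℤ}
    (hy : IsGorensteinPoint (coneOver P) (gradedToR n) y) (hy₁ : y.2 = 1) (m : ℕ) :
    ehrInt P (m + 1) = ehr P m := by
  have himage : (· + y) '' coneLevel P m =
      {p | gradedToR n p ∈ coneInterior (coneOver P) ∧ p.2 = (m + 1 : ℕ)} := by
    ext p
    simp [Set.image_add_right, latticeLevel, hy p, hy₁, ← sub_eq_add_neg, sub_eq_iff_eq_add]
  rw [ehr_eq_ncard_coneLevel hP, ehrInt_eq_ncard hP hne m.succ_ne_zero, ← himage,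
    Set.ncard_image_of_injective _ (add_left_injective y)]

theorem ncard_intrinsicInterior_eq_one (hP : Convex ℝ P) (hne : P.Nonempty)
    {y : (Fin n → ℤ) × ℤ} (hy : IsGorensteinPoint (coneOver P) (gradedToR n) y) (hy₁ : y.2 = 1) :
    {v : Fin n → ℤ | toR v ∈ intrinsicInterior ℝ P}.ncard = 1 := by
  have hset : {v : Fin n → ℤ | toR v ∈ intrinsicInterior ℝ P} =
      {v | (fun i => (v i : ℝ) / ((0 + 1 : ℕ) : ℝ)) ∈ intrinsicInterior ℝ P} := by
    simp only [div_eq_inv_smul_toR, zero_add, Nat.cast_one, inv_one, one_smul]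
  rw [hset]
  exact Nat.cast_injective (ehrInt_succ hP hne hy hy₁ 0)

theorem ehrSeries_mul_one_sub_X (hP : Convex ℝ P) (hne : P.Nonempty)
    {y : (Fin n → ℤ) × ℤ} (hy : IsGorensteinPoint (coneOver P) (gradedToR n) y) (hy₁ : y.2 = 1) :
    ehrSeries P * (1 - PowerSeries.X) = PowerSeries.mk fun m => ehr P m - ehrInt P m :=
  mk_mul_one_sub_X (by simp [ehrInt]) fun m => by rw [ehrInt_succ hP hne hy hy₁]; ring

theorem finite_setOf_toR_mem {s : Set (Fin n → ℝ)} (hs : Bornology.IsBounded s) :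
    {v | toR v ∈ s}.Finite :=
  (isometry_toR.antilipschitz.isBounded_preimage hs).isCompact_closure.finite_of_discrete.subset
    subset_closure

open scoped Pointwise in
theorem finite_coneLevel (hP : Convex ℝ P) (hb : Bornology.IsBounded P) (m : ℤ) :
    (coneLevel P m).Finite := by
  refine (((finite_setOf_toR_mem (hb.smul₀ (m : ℝ))).image (·, m)).insert 0).subset ?_
  rintro ⟨v, k⟩ ⟨hp, rfl : k = m⟩
  rcases (mem_EP_iff hP).2 hp with ⟨hk : 0 < k, hv⟩ | hp
  · rw [div_eq_inv_smul_toR] at hv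
    exact .inr ⟨v, (Set.mem_smul_set_iff_inv_smul_mem₀ (by exact_mod_cast hk.ne') _ _).2 hv, rfl⟩
  · exact .inl hp

end LatticePolytope

section Projection

variable {n : ℕ} {P : Set (Fin n → ℝ)}

/-- A lattice polytope: the convex hull of a nonempty finite set of lattice points. -/
def IsLatticePolytope (P : Set (Fin n → ℝ)) : Prop :=
  ∃ S : Finset (Fin n → ℤ), S.Nonempty ∧ P = convexHull ℝ (toR '' (S : Set (Fin n → ℤ)))

theorem IsLatticePolytope.convex (hP : IsLatticePolytope P) : Convex ℝ P := by
  obtain ⟨S, -, rfl⟩ := hP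
  exact convex_convexHull ℝ _

theorem IsLatticePolytope.nonempty (hP : IsLatticePolytope P) : P.Nonempty := by
  obtain ⟨S, hS, rfl⟩ := hP
  exact (hS.to_set.image toR).convexHull

theorem IsLatticePolytope.isBounded (hP : IsLatticePolytope P) : Bornology.IsBounded P := by
  obtain ⟨S, -, rfl⟩ := hP
  exact isBounded_convexHull.2 (S.finite_toSet.image toR).isBounded

/-- The projection of `ℝⁿ` along the lattice vector `w` onto the hyperplane `l ⬝ᵥ x = 0`, for
`l ⬝ᵥ w = 1`. -/
def latticeProj (l w : Fin n → ℤ) : (Fin n → ℝ) →ₗ[ℝ] (Fin n → ℝ) :=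
  projAlong (dotProductEquiv ℝ (Fin n) (toR l)) (toR w)

theorem toR_dotProduct (l v : Fin n → ℤ) : toR l ⬝ᵥ toR v = (l ⬝ᵥ v : ℤ) := by
  simp [dotProduct, toR]

theorem latticeProj_toR (l w v : Fin n → ℤ) :
    latticeProj l w (toR v) = toR (projAlong (dotProductEquiv ℤ (Fin n) l) w v) :=
  (map_projAlong (ι := toRHom n) (toR_dotProduct l) w v).symm

theorem IsLatticePolytope.image_latticeProj (hP : IsLatticePolytope P) (l w : Fin n → ℤ) :
    IsLatticePolytope (latticeProj l w '' P) := by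
  obtain ⟨S, hS, rfl⟩ := hP
  refine ⟨S.image (projAlong (dotProductEquiv ℤ (Fin n) l) w), hS.image _, ?_⟩
  rw [LinearMap.image_convexHull, Finset.coe_image, Set.image_image, Set.image_image]
  simp_rw [latticeProj_toR]

theorem pdim_image_latticeProj {l v₁ v₂ : Fin n → ℤ} (hl : l ⬝ᵥ (v₁ - v₂) = 1)
    (hv₁ : toR v₁ ∈ P) (hv₂ : toR v₂ ∈ P) :
    pdim (latticeProj l (v₁ - v₂) '' P) + 1 = pdim P := by
  have hdir : (affineSpan ℝ (latticeProj l (v₁ - v₂) '' P)).direction =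
      (affineSpan ℝ P).direction.map (latticeProj l (v₁ - v₂)) := by
    rw [← LinearMap.coe_toAffineMap, ← AffineSubspace.map_span, AffineSubspace.map_direction,
      LinearMap.toAffineMap_linear]
  rw [pdim, pdim, hdir]
  refine finrank_map_projAlong ?_ ?_
  · rw [dotProductEquiv_apply_apply, toR_dotProduct, hl, Int.cast_one]
  · rw [← toRHom_apply, map_sub]
    exact AffineSubspace.vsub_mem_direction (subset_affineSpan ℝ P hv₁) (subset_affineSpan ℝ P hv₂)

theorem projAlong_comp_fst {R M N : Type*} [CommRing R] [AddCommGroup M] [Module R M]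
    [AddCommGroup N] [Module R N] (f : Module.Dual R M) (w : M) :
    projAlong (f ∘ₗ LinearMap.fst R M N) (w, 0) = (projAlong f w).prodMap LinearMap.id := by
  ext <;> simp [projAlong_apply]

/-- The functional `p ↦ l ⬝ᵥ p.1` on the graded lattice. -/
def gradedDual (l : Fin n → ℤ) : Module.Dual ℤ ((Fin n → ℤ) × ℤ) :=
  dotProductEquiv ℤ (Fin n) l ∘ₗ LinearMap.fst ℤ (Fin n → ℤ) ℤ

/-- The functional `p ↦ l ⬝ᵥ p.1` on the real vector space containing the cone over `P`. -/
def gradedDualReal (l : Fin n → ℤ) : Module.Dual ℝ ((Fin n → ℝ) × ℝ) :=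
  dotProductEquiv ℝ (Fin n) (toR l) ∘ₗ LinearMap.fst ℝ (Fin n → ℝ) ℝ

theorem gradedDualReal_gradedToR (l : Fin n → ℤ) (p : (Fin n → ℤ) × ℤ) :
    gradedDualReal l (gradedToR n p) = gradedDual l p :=
  toR_dotProduct l p.1

theorem projAlong_gradedDual (l : Fin n → ℤ) {w : (Fin n → ℤ) × ℤ} (hw : w.2 = 0) :
    projAlong (gradedDual l) w =
      (projAlong (dotProductEquiv ℤ (Fin n) l) w.1).prodMap LinearMap.id := by
  obtain ⟨w, rfl⟩ : ∃ w', w = (w', 0) := ⟨w.1, Prod.ext rfl hw⟩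
  exact projAlong_comp_fst _ w

theorem coneOver_image_latticeProj (l : Fin n → ℤ) {w : (Fin n → ℤ) × ℤ} (hw : w.2 = 0) :
    coneOver (latticeProj l w.1 '' P) =
      (coneOver P).map (projAlong (gradedDualReal l) (gradedToR n w)) := by
  rw [coneOver_image, gradedToR_apply, hw, Int.cast_zero, gradedDualReal, projAlong_comp_fst,
    latticeProj]

end Projection

section GorensteinPolytope

variable {n : ℕ} {P : Set (Fin n → ℝ)} {y y₁ y₂ z : (Fin n → ℤ) × ℤ} {l : Fin n → ℤ}

/-- `P` is an integrally closed lattice polytope whose algebra `K[P]` is Gorenstein, with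
`relint E(P) = y + E(P)`. -/
structure IsGorensteinPolytope (P : Set (Fin n → ℝ)) (y : (Fin n → ℤ) × ℤ) : Prop where
  isLatticePolytope : IsLatticePolytope P
  intClosed : IntClosed P
  isGorensteinPoint : IsGorensteinPoint (coneOver P) (gradedToR n) y

theorem gradedToR_mem_coneOver_iff (hP : Convex ℝ P) (hy : y.2 = 1) :
    gradedToR n y ∈ coneOver P ↔ toR y.1 ∈ P := by
  rw [gradedToR_apply, hy, Int.cast_one, mk_one_mem_coneOver hP]

theorem snd_nonneg_of_gradedToR_mem (hP : Convex ℝ P) (hy : gradedToR n y ∈ coneOver P) :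
    0 ≤ y.2 :=
  Int.cast_nonneg_iff.1 (snd_nonneg_of_mem_coneOver hP hy)

theorem eq_zero_of_gradedToR_mem (hP : Convex ℝ P) (hy : gradedToR n y ∈ coneOver P)
    (hy₀ : y.2 = 0) : y = 0 :=
  (map_eq_zero_iff _ gradedToR_injective).1
    (eq_zero_of_mem_coneOver hP hy (Int.cast_eq_zero.2 hy₀))

theorem IsGorensteinPolytope.exists_splitting (hP : IsGorensteinPolytope P y) {c : ℕ}
    (hy : y.2 = c + 2) : ∃ y₁ y₂ z, GorensteinSplitting (coneOver P) (gradedToR n) y₁ y₂ z ∧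
      y₁.2 = 1 ∧ y₂.2 = 1 ∧ y₁ + y₂ + z = y := by
  have hconv := hP.isLatticePolytope.convex
  obtain ⟨v, hv, hsum⟩ := hP.intClosed y ((mem_EP_iff hconv).2 hP.isGorensteinPoint.mem) (c + 2)
    (by exact_mod_cast hy)
  have hmem (j) : gradedToR n (v j, 1) ∈ coneOver P :=
    (gradedToR_mem_coneOver_iff hconv rfl).2 (hv j)
  have hy_eq : (v 0, 1) + (v 1, 1) + ∑ j : Fin c, (v j.succ.succ, (1 : ℤ)) = y := by
    have hsum' : ∑ j, (v j, (1 : ℤ)) = y := by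
      ext1 <;> simp [Prod.fst_sum, Prod.snd_sum, hsum, hy]
    rw [← hsum', Fin.sum_univ_succ, Fin.sum_univ_succ, add_assoc]
    rfl
  refine ⟨_, _, _, ⟨?_, hmem 0, hmem 1, ?_⟩, rfl, rfl, hy_eq⟩
  · rw [hy_eq]
    exact hP.isGorensteinPoint
  · rw [map_sum]
    exact sum_mem fun j _ => hmem _

theorem exists_dotProduct_sub_eq_one (hP : Convex ℝ P)
    (h : GorensteinSplitting (coneOver P) (gradedToR n) y₁ y₂ z) (hy₁ : y₁.2 = 1)
    (hy₂ : y₂.2 = 1) : ∃ l : Fin n → ℤ, l ⬝ᵥ (y₁ - y₂).1 = 1 := by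
  have hne : y₁ ≠ y₂ := h.fst_ne_snd (deg := AddMonoidHom.snd _ _)
    (fun _ => snd_nonneg_of_gradedToR_mem hP) (by simp [hy₁])
  refine exists_dotProduct_eq_one fun d v hv => h.isUnit_of_sub_eq_zsmul
    (deg := AddMonoidHom.snd _ _) (v := (v, 0)) (fun _ => eq_zero_of_gradedToR_mem hP) hne
    (hy₁.trans hy₂.symm) (Prod.ext hv ?_)
  simp [hy₁, hy₂]

theorem intClosed_image_latticeProj (hP : Convex ℝ P) (hic : IntClosed P)
    (h : GorensteinSplitting (coneOver P) (gradedToR n) y₁ y₂ z) (hy₁₂ : (y₁ - y₂).2 = 0)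
    (hl : l ⬝ᵥ (y₁ - y₂).1 = 1) : IntClosed (latticeProj l (y₁ - y₂).1 '' P) := by
  intro p hp c hc
  rw [mem_EP_iff (hP.linear_image _), coneOver_image_latticeProj l hy₁₂,
    h.mem_map_projAlong_iff (gradedDualReal_gradedToR l) hl] at hp
  obtain ⟨e, he, rfl⟩ := hp
  rw [projAlong_gradedDual l hy₁₂] at hc ⊢
  obtain ⟨v, hv, hsum⟩ := hic e ((mem_EP_iff hP).2 he) c hc
  refine ⟨fun j => projAlong (dotProductEquiv ℤ (Fin n) l) (y₁ - y₂).1 (v j), fun j => ?_, ?_⟩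
  · rw [← latticeProj_toR]
    exact Set.mem_image_of_mem _ (hv j)
  · rw [← map_sum, hsum]
    rfl

theorem IsGorensteinPolytope.image_latticeProj (hP : IsGorensteinPolytope P (y₁ + y₂ + z))
    (h : GorensteinSplitting (coneOver P) (gradedToR n) y₁ y₂ z) (hy₁₂ : (y₁ - y₂).2 = 0)
    (hl : l ⬝ᵥ (y₁ - y₂).1 = 1) :
    IsGorensteinPolytope (latticeProj l (y₁ - y₂).1 '' P)
      (projAlong (gradedDual l) (y₁ - y₂) (y₁ + z)) where
  isLatticePolytope := hP.isLatticePolytope.image_latticeProj l _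
  intClosed := intClosed_image_latticeProj hP.isLatticePolytope.convex hP.intClosed h hy₁₂ hl
  isGorensteinPoint := by
    rw [coneOver_image_latticeProj l hy₁₂]
    exact h.isGorensteinPoint_map_projAlong (gradedDualReal_gradedToR l) hl

theorem ehrSeries_image_latticeProj (hP : Convex ℝ P) (hb : Bornology.IsBounded P)
    (h : GorensteinSplitting (coneOver P) (gradedToR n) y₁ y₂ z) (hy₁ : y₁.2 = 1)
    (hy₂ : y₂.2 = 1) (hl : l ⬝ᵥ (y₁ - y₂).1 = 1) :
    ehrSeries P * (1 - PowerSeries.X) = ehrSeries (latticeProj l (y₁ - y₂).1 '' P) := by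
  refine mk_mul_one_sub_X (by simp [ehr]) fun m => ?_
  have hcount := h.ncard_latticeLevel (deg := AddMonoidHom.snd _ _) (m := m)
    (gradedDualReal_gradedToR l) hl (hy₁.trans hy₂.symm) (finite_coneLevel hP hb _)
  rw [← coneOver_image_latticeProj l (by simp [hy₁, hy₂]), AddMonoidHom.coe_snd, hy₁] at hcount
  rw [ehr_eq_ncard_coneLevel hP, ehr_eq_ncard_coneLevel hP,
    ehr_eq_ncard_coneLevel (hP.linear_image _)]
  exact_mod_cast hcount

/-- The numerator `h₀ + h₁ t + ⋯ + h_d t^d` of the Ehrhart series. -/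
def hSeries (P : Set (Fin n → ℝ)) : PowerSeries ℤ :=
  ehrSeries P * (1 - PowerSeries.X) ^ (pdim P + 1)

theorem IsGorensteinPolytope.exists_hSeries_eq_of_snd_eq_add_two (hP : IsGorensteinPolytope P y)
    {c : ℕ} (hy : y.2 = c + 2) :
    ∃ (Q : Set (Fin n → ℝ)) (y' : (Fin n → ℤ) × ℤ),
      IsGorensteinPolytope Q y' ∧ y'.2 = c + 1 ∧ hSeries P = hSeries Q := by
  have hconv := hP.isLatticePolytope.convex
  obtain ⟨y₁, y₂, z, h, hy₁, hy₂, rfl⟩ := hP.exists_splitting hy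
  have hy₁₂ : (y₁ - y₂).2 = 0 := by simp [hy₁, hy₂]
  obtain ⟨l, hl⟩ := exists_dotProduct_sub_eq_one hconv h hy₁ hy₂
  refine ⟨_, _, hP.image_latticeProj h hy₁₂ hl, ?_, ?_⟩
  · rw [projAlong_gradedDual l hy₁₂]
    have hsnd : (y₁ + z).2 = c + 1 := by
      simp only [Prod.snd_add, hy₁, hy₂] at hy ⊢
      linarith
    exact hsnd
  · rw [hSeries, hSeries, ← ehrSeries_image_latticeProj hconv hP.isLatticePolytope.isBounded h hy₁
      hy₂ hl, ← pdim_image_latticeProj hl ((gradedToR_mem_coneOver_iff hconv hy₁).1 h.fst_mem)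
      ((gradedToR_mem_coneOver_iff hconv hy₂).1 h.snd_mem), pow_succ', mul_assoc]
    rfl

theorem IsGorensteinPolytope.exists_hSeries_eq_of_snd_eq_add_one (hP : IsGorensteinPolytope P y)
    {c : ℕ} (hy : y.2 = c + 1) :
    ∃ (Q : Set (Fin n → ℝ)) (y' : (Fin n → ℤ) × ℤ),
      IsGorensteinPolytope Q y' ∧ y'.2 = 1 ∧ hSeries P = hSeries Q := by
  induction c generalizing P y with
  | zero => exact ⟨P, y, hP, by simpa using hy, rfl⟩
  | succ c ih =>
    obtain ⟨Q, y', hQ, hy', hPQ⟩ := hP.exists_hSeries_eq_of_snd_eq_add_two (c := c)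
      (by rw [hy]; push_cast; ring)
    obtain ⟨R, y'', hR, hy'', hQR⟩ := ih hQ hy'
    exact ⟨R, y'', hR, hy'', hPQ.trans hQR⟩

end GorensteinPolytope

/-- if `P` is an integrally closed integral polytope with `K[P]`
Gorenstein, then there is an integrally closed integral polytope `Q` with `K[Q]`
Gorenstein whose relative interior contains exactly one lattice point and whose Ehrhart
`h`-vector coincides with that of `P`: the numerator polynomials
`E_P(t)(1-t)^{dim P + 1} = E_Q(t)(1-t)^{dim Q + 1}` agree; moreover
`h(Q) = h(∂Q)`. -/
theorem gorenstein_polytope_reduction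
    (n : ℕ) (S : Finset (Fin n → ℤ)) (hS : S.Nonempty)
    (P : Set (Fin n → ℝ)) (hP : P = convexHull ℝ (toR '' (S : Set (Fin n → ℤ))))
    (hic : IntClosed P) (hgor : GorensteinP P) :
    ∃ (n' : ℕ) (S' : Finset (Fin n' → ℤ)) (Q : Set (Fin n' → ℝ)),
      S'.Nonempty ∧
      Q = convexHull ℝ (toR '' (S' : Set (Fin n' → ℤ))) ∧
      IntClosed Q ∧
      GorensteinP Q ∧
      Set.ncard {z : Fin n' → ℤ | toR z ∈ intrinsicInterior ℝ Q} = 1 ∧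
      ehrSeries P * (1 - PowerSeries.X) ^ (pdim P + 1)
        = ehrSeries Q * (1 - PowerSeries.X) ^ (pdim Q + 1) ∧
      PowerSeries.mk (fun m => ehr Q m - ehrInt Q m) * (1 - PowerSeries.X) ^ (pdim Q)
        = ehrSeries Q * (1 - PowerSeries.X) ^ (pdim Q + 1) := by
  have hlat : IsLatticePolytope P := ⟨S, hS, hP⟩
  obtain ⟨y, hy⟩ := (gorensteinP_iff hlat.convex hlat.nonempty).1 hgor
  have hpos : 0 < y.2 := ((mem_relintEP_iff hlat.convex hlat.nonempty).2 hy.mem_coneInterior).1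
  obtain ⟨c, hc⟩ : ∃ c : ℕ, y.2 = c + 1 := ⟨(y.2 - 1).toNat, by omega⟩
  obtain ⟨Q, y', ⟨hQ, hQic, hy'⟩, hy'₁, hPQ⟩ :=
    IsGorensteinPolytope.exists_hSeries_eq_of_snd_eq_add_one ⟨hlat, hic, hy⟩ hc
  obtain ⟨S', hS', hQS'⟩ := id hQ
  refine ⟨n, S', Q, hS', hQS', hQic, (gorensteinP_iff hQ.convex hQ.nonempty).2 ⟨y', hy'⟩,
    ncard_intrinsicInterior_eq_one hQ.convex hQ.nonempty hy' hy'₁, hPQ, ?_⟩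
  rw [← ehrSeries_mul_one_sub_X hQ.convex hQ.nonempty hy' hy'₁, pow_succ', mul_assoc]

end
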